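/- Let G be a connected graph on {x_1,...,x_t, y_1,...,y_t}, t ≥ 2, whose edge set is {x_i y_i : 1 ≤ i ≤ t} ∪ {x_i x_j : 1 ≤ i < j ≤ t} (so each y_i is a leaf and the x-vertices induce a complete graph). Let ω give weight 1 to every edge x_i x_j and weight m_i = ω(x_i y_i) to the pendant edges. Then R/I(G_ω)^n is Cohen-Macaulay for all n ≥ 1 if and only if m_i ≥ 2 for all i = 1,...,t. -/

import Mathlib

open MvPolynomial Sum

/-- `R/I` is Cohen–Macaulay: there is a regular sequence on `R/I` contained in the
maximal ideal generated by the variables whose length equals the Krull dimension of `R/I`. -/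
def IsCMQuot {K : Type*} [Field K] {σ : Type*} (I : Ideal (MvPolynomial σ K)) : Prop :=
  ∃ rs : List (MvPolynomial σ K),
    (∀ r ∈ rs, r ∈ Ideal.span (Set.range (X : σ → MvPolynomial σ K))) ∧
    RingTheory.Sequence.IsRegular (MvPolynomial σ K ⧸ I) rs ∧
    (rs.length : WithBot (WithTop ℕ)) = ringKrullDim (MvPolynomial σ K ⧸ I)



/-- maximal annihilators below a prime are prime -/
lemma exists_prime_ann {R M : Type*} [CommRing R] [IsNoetherianRing R] [AddCommGroup M] [Module R M]
    (𝔪 : Ideal R) [h𝔪 : 𝔪.IsPrime] (h : M) (hh : ∀ s : R, s • h = 0 → s ∈ 𝔪) :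
    ∃ (p : Ideal R) (h' : M), p.IsPrime ∧ p ≤ 𝔪 ∧ (∀ s, s • h = 0 → s ∈ p) ∧
      (∀ s, s ∈ p ↔ s • h' = 0) := by
  let T : Set (Ideal R) := {p | p ≤ 𝔪 ∧ (∀ s, s • h = 0 → s ∈ p) ∧
    ∃ h' : M, ∀ s, s ∈ p ↔ s • h' = 0}
  have hT : T.Nonempty := by
    refine ⟨LinearMap.ker (LinearMap.toSpanSingleton R M h), ?_, ?_, h, ?_⟩
    · intro s hs; exact hh s (by simpa using hs)
    · intro s hs; simpa using hs
    · intro s; simp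
  obtain ⟨p, ⟨hp1, hp2, h', hp3⟩, hmax⟩ := set_has_maximal_iff_noetherian.mpr inferInstance T hT
  refine ⟨p, h', ⟨?_, ?_⟩, hp1, hp2, hp3⟩
  · rintro rfl; exact h𝔪.ne_top (top_le_iff.mp hp1)
  · intro a b hab
    by_contra hcon
    push Not at hcon
    obtain ⟨ha, hb⟩ := hcon
    -- general: if the annihilator of c h' is in 𝔪, it equals p
    have key : ∀ c : R, (∀ s, s • c • h' = 0 → s ∈ 𝔪) → ∀ s, s • c • h' = 0 → s ∈ p := by
      intro c hc s hs
      by_contra hsp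
      refine hmax (LinearMap.ker (LinearMap.toSpanSingleton R M (c • h'))) ⟨?_, ?_, c • h', ?_⟩ ?_
      · intro s hs; exact hc s (by simpa using hs)
      · intro s hs
        have := (hp3 s).1 (hp2 s hs)
        simp only [LinearMap.mem_ker, LinearMap.toSpanSingleton_apply]
        rw [smul_comm, this, smul_zero]
      · intro s; simp
      · refine lt_of_le_of_ne ?_ ?_
        · intro s hs
          have := (hp3 s).1 hs
          simp only [LinearMap.mem_ker, LinearMap.toSpanSingleton_apply]
          rw [smul_comm, this, smul_zero]
        · intro he; apply hsp; rw [he]; simpa using hs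
    have hba : b • a • h' = 0 := by
      rw [smul_smul, mul_comm]; exact (hp3 _).1 hab
    by_cases hc : ∀ s, s • a • h' = 0 → s ∈ 𝔪
    · exact hb (key a hc b hba)
    · push Not at hc
      obtain ⟨s, hs, hsm⟩ := hc
      refine ha (key s ?_ a (by rw [smul_comm]; exact hs))
      intro s' hs'
      have : s' * s ∈ 𝔪 := hp1 ((hp3 _).2 (by rw [mul_smul]; exact hs'))
      exact (h𝔪.mem_or_mem this).resolve_right hsm

lemma exists_ann_step {R M : Type*} [CommRing R] [IsNoetherianRing R] [AddCommGroup M] [Module R M]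
    [IsNoetherian R M]
    (𝔪 : Ideal R) [h𝔪 : 𝔪.IsPrime] (r : R) (hr : r ∈ 𝔪) (hreg : IsSMulRegular M r)
    (p : Ideal R) (hp : p ≤ 𝔪) (h : M) (hph : ∀ s, s ∈ p ↔ s • h = 0) :
    ∃ n : M, (∀ s ∈ p, s • n = 0) ∧ ∀ s : R, (∃ n', s • n = r • n') → s ∈ 𝔪 := by
  by_contra hcon
  push Not at hcon
  have hr0 : ∀ x : M, r • x = 0 → x = 0 := fun x hx => hreg (by simpa using hx)
  have claim : ∀ k : ℕ, ∃ n : M, (∀ s ∈ p, s • n = 0) ∧ ∃ s ∉ 𝔪, r ^ k • n = s • h := by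
    intro k
    induction k with
    | zero => exact ⟨h, fun s hs => (hph s).1 hs, 1, fun h1 => h𝔪.ne_top ((Ideal.eq_top_iff_one _).2 h1), by simp⟩
    | succ k ih =>
      obtain ⟨n, hn, s, hs, hsn⟩ := ih
      obtain ⟨s', ⟨n', hn'⟩, hs'⟩ := hcon n hn
      refine ⟨n', ?_, s' * s, fun hmem => (h𝔪.mem_or_mem hmem).elim hs' hs, ?_⟩
      · intro a ha
        apply hr0
        rw [smul_comm, ← hn', smul_comm, hn a ha, smul_zero]
      · rw [pow_succ, mul_smul, ← hn', smul_comm, hsn, mul_smul]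
  let F : ℕ →o Submodule R M :=
    ⟨fun k => (R ∙ h).comap (LinearMap.lsmul R M (r ^ k)), by
      refine monotone_nat_of_le_succ ?_
      intro k x hx
      simp only [Submodule.mem_comap, LinearMap.lsmul_apply] at hx ⊢
      rw [pow_succ', mul_smul]
      exact Submodule.smul_mem _ _ hx⟩
  obtain ⟨k, hk⟩ := monotone_stabilizes_iff_noetherian.mpr inferInstance F
  obtain ⟨n, hn, s, hs, hsn⟩ := claim (k+1)
  have h1 : n ∈ F (k+1) := by
    change r ^ (k+1) • n ∈ Submodule.span R {h}
    rw [hsn]; exact Submodule.smul_mem _ _ (Submodule.mem_span_singleton_self h)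
  rw [← hk (k+1) (Nat.le_succ k)] at h1
  obtain ⟨a, ha⟩ := Submodule.mem_span_singleton.1 (show r ^ k • n ∈ Submodule.span R {h} from h1)
  have h2 : (s - r * a) • h = 0 := by
    rw [sub_smul, ← hsn, mul_smul, ha, smul_smul, ← pow_succ', sub_self]
  have h3 := hp ((hph _).2 h2)
  apply hs
  have := 𝔪.add_mem h3 (𝔪.mul_mem_right a hr)
  simpa using this

lemma dim_step {R : Type*} [CommRing R] (p q : Ideal R) [p.IsPrime] (hpq : p < q) :
    ringKrullDim (R ⧸ q) + 1 ≤ ringKrullDim (R ⧸ p) := by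
  obtain ⟨x, hxq, hxp⟩ := SetLike.exists_of_lt hpq
  refine ringKrullDim_succ_le_of_surjective (Ideal.Quotient.factor hpq.le)
    (Ideal.Quotient.factor_surjective hpq.le) (r := Ideal.Quotient.mk p x) ?_ ?_
  · rw [mem_nonZeroDivisors_iff_ne_zero]
    rwa [Ne, Ideal.Quotient.eq_zero_iff_mem]
  · simpa using Ideal.Quotient.eq_zero_iff_mem.2 hxq

lemma length_le_dim {R : Type*} [CommRing R] [IsNoetherianRing R] (𝔪 : Ideal R) [h𝔪 : 𝔪.IsPrime]
    (rs : List R) : ∀ {M : Type _} [AddCommGroup M] [Module R M] [IsNoetherian R M]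
    (_ : ∀ r ∈ rs, r ∈ 𝔪) (_ : RingTheory.Sequence.IsWeaklyRegular M rs)
    (p : Ideal R) (_ : p.IsPrime) (_ : p ≤ 𝔪) (h : M) (_ : ∀ s, s ∈ p ↔ s • h = 0),
    (rs.length : WithBot (WithTop ℕ)) ≤ ringKrullDim (R ⧸ p) := by
  induction rs with
  | nil =>
    intro M _ _ _ _ _ p hp _ _ _
    have : Nontrivial (R ⧸ p) := Ideal.Quotient.nontrivial_iff.mpr hp.ne_top
    simpa using! ringKrullDim_nonneg_of_nontrivial
  | cons r rs ih =>
    intro M _ _ _ hm hreg p hp hpm h hph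
    rw [RingTheory.Sequence.isWeaklyRegular_cons_iff] at hreg
    have hr : r ∈ 𝔪 := hm r (by simp)
    obtain ⟨n, hn1, hn2⟩ := exists_ann_step 𝔪 r hr hreg.1 p hpm h hph
    have hq0 : ∀ x : M, (Submodule.Quotient.mk x : QuotSMulTop r M) = 0 ↔ ∃ y, x = r • y := by
      intro x
      rw [Submodule.Quotient.mk_eq_zero]
      rw [Submodule.mem_smul_pointwise_iff_exists]
      simp [eq_comm]
    obtain ⟨q, n', hqp, hqm, hq1, hq2⟩ := exists_prime_ann 𝔪
      (Submodule.Quotient.mk n : QuotSMulTop r M) (by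
        intro s hs
        rw [← Submodule.Quotient.mk_smul, hq0] at hs
        exact hn2 s hs)
    have hpq : p < q := by
      refine lt_of_le_of_ne ?_ ?_
      · intro s hs
        apply hq1
        rw [← Submodule.Quotient.mk_smul, hn1 s hs, Submodule.Quotient.mk_zero]
      · rintro rfl
        have hrp : r ∈ p := by
          apply hq1
          rw [← Submodule.Quotient.mk_smul, hq0]
          exact ⟨n, rfl⟩
        have h0 : h = 0 := hreg.1 (by simpa using (hph r).1 hrp)
        exact hp.ne_top ((Ideal.eq_top_iff_one _).2 ((hph 1).2 (by simp [h0])))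
    have := ih (fun r hr => hm r (by simp [hr])) hreg.2 q hqp hqm n' hq2
    refine le_trans ?_ (dim_step p q hpq)
    simp only [List.length_cons, Nat.cast_add, Nat.cast_one]
    exact add_le_add this le_rfl


/-- dimension bound through primes -/
lemma dim_quot_le_of_primes {R : Type*} [CommRing R] (J : Ideal R) (t : ℕ)
    (H : ∀ p : Ideal R, p.IsPrime → J ≤ p → ringKrullDim (R ⧸ p) ≤ (t : WithBot ℕ∞)) :
    ringKrullDim (R ⧸ J) ≤ (t : WithBot ℕ∞) := by
  rw [ringKrullDim_quotient]
  refine iSup_le fun l => ?_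
  have h1 := H l.head.1.asIdeal l.head.1.isPrime l.head.2
  refine le_trans ?_ h1
  rw [ringKrullDim_quotient]
  let l' : LTSeries (PrimeSpectrum.zeroLocus (R := R) (l.head.1.asIdeal : Set R)) :=
    { length := l.length
      toFun := fun i => ⟨(l i).1, by
        have : l.head ≤ l i := LTSeries.head_le l i
        exact this⟩
      step := fun i => l.step i }
  exact le_iSup_of_le l' le_rfl

lemma dim_quot_vars_le {K : Type*} [Field K] {σ τ : Type*} [Fintype τ] (t : ℕ)
    (ht : Fintype.card τ = t)
    (p : Ideal (MvPolynomial σ K)) (v : τ → σ)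
    (H : ∀ s : σ, X s ∈ p ∨ ∃ i, v i = s) :
    ringKrullDim (MvPolynomial σ K ⧸ p) ≤ (t : WithBot ℕ∞) := by
  let f : MvPolynomial τ K →ₐ[K] (MvPolynomial σ K ⧸ p) :=
    aeval (fun i => Ideal.Quotient.mk p (X (v i)))
  have hf : Function.Surjective f := by
    rw [← AlgHom.range_eq_top]
    have h2 : ∀ g : MvPolynomial σ K, Ideal.Quotient.mkₐ K p g ∈ f.range := by
      intro g
      induction g using MvPolynomial.induction_on with
      | C a =>
        have : Ideal.Quotient.mkₐ K p (C a) = algebraMap K _ a := 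
          (Ideal.Quotient.mkₐ K p).commutes a
        rw [this]
        exact Subalgebra.algebraMap_mem _ a
      | add a b ha hb => rw [map_add]; exact add_mem ha hb
      | mul_X a s ha =>
        rw [map_mul]
        refine mul_mem ha ?_
        rcases H s with hs | ⟨i, rfl⟩
        · have : Ideal.Quotient.mkₐ K p (X s) = 0 := Ideal.Quotient.eq_zero_iff_mem.2 hs
          rw [this]; exact zero_mem _
        · exact ⟨X i, by simp [f]⟩
    rw [eq_top_iff]
    intro x _
    obtain ⟨g, rfl⟩ := Ideal.Quotient.mkₐ_surjective K p x
    exact h2 g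
  refine (ringKrullDim_le_of_surjective f.toRingHom hf).trans ?_
  rw [MvPolynomial.ringKrullDim_of_isNoetherianRing]
  simp [ht]

lemma le_dim_quot {K : Type*} [Field K] (t : ℕ) (J : Ideal (MvPolynomial (Fin t ⊕ Fin t) K))
    (H : J ≤ Ideal.span (Set.range fun i : Fin t => X (inl i))) :
    (t : WithBot ℕ∞) ≤ ringKrullDim (MvPolynomial (Fin t ⊕ Fin t) K ⧸ J) := by
  let f : MvPolynomial (Fin t ⊕ Fin t) K →ₐ[K] MvPolynomial (Fin t) K :=
    aeval (Sum.elim (fun _ => 0) X)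
  have hf : ∀ a ∈ J, f.toRingHom a = 0 := by
    intro a ha
    have : Ideal.span (Set.range fun i : Fin t => (X (inl i) : MvPolynomial (Fin t ⊕ Fin t) K))
        ≤ RingHom.ker f.toRingHom := by
      rw [Ideal.span_le]
      rintro _ ⟨i, rfl⟩
      simp [f, RingHom.mem_ker]
    exact this (H ha)
  have hs : Function.Surjective (Ideal.Quotient.lift J f.toRingHom hf) := by
    apply Ideal.Quotient.lift_surjective_of_surjective
    intro g
    refine ⟨rename inr g, ?_⟩
    change f (rename inr g) = g
    rw [aeval_rename]
    simp
  refine le_trans ?_ (ringKrullDim_le_of_surjective _ hs)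
  rw [MvPolynomial.ringKrullDim_of_isNoetherianRing]
  simp

lemma mk_mem_smul_top {R : Type*} [CommRing R] (I J : Ideal R) (g : R) :
    (Ideal.Quotient.mk I g : R ⧸ I) ∈ (J • ⊤ : Submodule R (R ⧸ I)) ↔ g ∈ I ⊔ J := by
  have h1 : (J • ⊤ : Submodule R (R ⧸ I)) = Submodule.map (Submodule.mkQ I) J := by
    have : (⊤ : Submodule R (R ⧸ I)) = Submodule.map (Submodule.mkQ I) ⊤ := by
      rw [Submodule.map_top, Submodule.range_mkQ]
    rw [this, ← Submodule.map_smul'']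
    simp
  rw [h1]
  constructor
  · rintro ⟨j, hj, hjg⟩
    have : g - j ∈ I := by
      rw [← Ideal.Quotient.eq]; exact hjg.symm
    have := Submodule.add_mem_sup this hj
    simpa using this
  · intro h
    obtain ⟨i, hi, j, hj, rfl⟩ := Submodule.mem_sup.1 h
    refine ⟨j, hj, ?_⟩
    refine Ideal.Quotient.eq.2 ?_
    simpa using I.neg_mem hi

lemma weaklyRegular_quot_iff {R : Type*} [CommRing R] (I : Ideal R) (rs : List R) :
    RingTheory.Sequence.IsWeaklyRegular (R ⧸ I) rs ↔
    ∀ i (h : i < rs.length), ∀ g : R, rs[i] * g ∈ I ⊔ Ideal.ofList (rs.take i) →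
      g ∈ I ⊔ Ideal.ofList (rs.take i) := by
  rw [RingTheory.Sequence.isWeaklyRegular_iff]
  refine forall_congr' fun i => forall_congr' fun hi => ?_
  rw [isSMulRegular_quotient_iff_mem_of_smul_mem]
  constructor
  · intro H g hg
    have := H (Ideal.Quotient.mk I g) (by
      have := (mk_mem_smul_top I (Ideal.ofList (rs.take i)) _).2 hg
      exact this)
    exact (mk_mem_smul_top I _ _).1 this
  · intro H x hx
    obtain ⟨g, rfl⟩ := Ideal.Quotient.mk_surjective x
    exact (mk_mem_smul_top I _ _).2 (H g ((mk_mem_smul_top I _ _).1 hx))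

/-- `X b - X a` is a nonzerodivisor modulo suitable monomial ideals. -/
lemma nzd_crit {K : Type*} [Field K] {σ : Type*} (a b : σ) (hab : a ≠ b) (U : (σ →₀ ℕ) → Prop)
    (hU : ∀ e u u' : σ →₀ ℕ, (∀ i, i ≠ a → i ≠ b → u i = e i ∧ u' i = e i) → u a ≤ e a →
      u' b ≤ e b → U u → U u' → U e)
    (g : MvPolynomial σ K) (hg : ∀ e ∈ ((X b - X a) * g).support, U e) :
    ∀ e ∈ g.support, U e := by
  classical
  have hc : ∀ e : σ →₀ ℕ, coeff e ((X b - X a) * g) = 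
      (if b ∈ e.support then coeff (e - Finsupp.single b 1) g else 0)
      - (if a ∈ e.support then coeff (e - Finsupp.single a 1) g else 0) := by
    intro e
    rw [sub_mul, coeff_sub, coeff_X_mul', coeff_X_mul']
  have main : ∀ (a b : σ), a ≠ b → (∀ e : σ →₀ ℕ, ¬ U e →
      (if b ∈ e.support then coeff (e - Finsupp.single b 1) g else 0) =
      (if a ∈ e.support then coeff (e - Finsupp.single a 1) g else 0)) →
      ∀ (k : ℕ) (e : σ →₀ ℕ), e a = k → e ∈ g.support → ∃ u, U u ∧ u a ≤ e a ∧
        ∀ i, i ≠ a → i ≠ b → u i = e i := by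
    intro a b hab hc k
    induction k with
    | zero =>
      intro e hk he
      refine ⟨e + Finsupp.single b 1, ?_, ?_, ?_⟩
      · by_contra hcon
        have := hc _ hcon
        simp [hk, hab, hab.symm] at this
        exact mem_support_iff.1 he this
      · simp [hab, hab.symm]
      · intro i h1 h2; simp [h2, h2.symm]
    | succ k ih =>
      intro e hk he
      by_cases hcon : U (e + Finsupp.single b 1)
      · refine ⟨_, hcon, ?_, ?_⟩
        · simp [hab, hab.symm]
        · intro i h1 h2; simp [h2, h2.symm]
      · have := hc _ hcon
        simp [hk, hab, hab.symm] at this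
        obtain ⟨u, hu1, hu2, hu3⟩ := ih (e + Finsupp.single b 1 - Finsupp.single a 1)
          (by simp [hk, hab, hab.symm]) (by
            rw [mem_support_iff, ← this]; exact mem_support_iff.1 he)
        refine ⟨u, hu1, ?_, ?_⟩
        · refine hu2.trans ?_
          simp [hab, hab.symm]
        · intro i h1 h2; rw [hu3 i h1 h2]; simp [h1, h2, h1.symm, h2.symm]
  have hz : ∀ e : σ →₀ ℕ, ¬ U e →
      (if b ∈ e.support then coeff (e - Finsupp.single b 1) g else 0) =
      (if a ∈ e.support then coeff (e - Finsupp.single a 1) g else 0) := by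
    intro e he
    have : coeff e ((X b - X a) * g) = 0 := by
      by_contra hne; exact he (hg e (mem_support_iff.2 hne))
    rw [hc] at this
    exact sub_eq_zero.1 this
  intro e he
  obtain ⟨u, hu1, hu2, hu3⟩ := main a b hab hz _ e rfl he
  obtain ⟨u', hu1', hu2', hu3'⟩ := main b a hab.symm (fun e he => (hz e he).symm) _ e rfl he
  exact hU e u u' (fun i h1 h2 => ⟨hu3 i h1 h2, hu3' i h2 h1⟩) hu2 hu2' hu1 hu1'


lemma sum_upd {t : ℕ} (f : Fin t → ℕ) (p : Fin t) (v : ℕ) :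
    (∑ i, Function.update f p v i) + f p = (∑ i, f i) + v := by
  rw [Finset.sum_update_of_mem (Finset.mem_univ p)]
  rw [← Finset.add_sum_erase Finset.univ f (Finset.mem_univ p), Finset.sdiff_singleton_eq_erase]
  omega

open Classical in
/-- exponent consumed from `x_i` by one use of the `i`-th pendant generator -/
noncomputable def wt {t : ℕ} (m : Fin t → ℕ) (S : Set (Fin t)) (i : Fin t) : ℕ :=
  if i ∈ S then 2 * m i else m i

/-- exponents of monomials in the `n`-th power -/
def ExpMem {t : ℕ} (m : Fin t → ℕ) (S : Set (Fin t)) (n : ℕ) (e : Fin t ⊕ Fin t →₀ ℕ) : Prop :=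
  ∃ c d : Fin t → ℕ, (∀ i, wt m S i * c i + d i ≤ e (inl i)) ∧
    (∀ i, i ∉ S → m i * c i ≤ e (inr i)) ∧
    2 * n ≤ 2 * (∑ i, c i) + ∑ i, d i ∧ ∀ i, n + d i ≤ (∑ i, c i) + ∑ i, d i

lemma ExpMem.mono {t : ℕ} {m : Fin t → ℕ} {S : Set (Fin t)} {n : ℕ} {e e' : Fin t ⊕ Fin t →₀ ℕ}
    (h : ExpMem m S n e) (hle : e ≤ e') : ExpMem m S n e' := by
  obtain ⟨c, d, h1, h2, h3, h4⟩ := h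
  exact ⟨c, d, fun i => (h1 i).trans (hle _), fun i hi => (h2 i hi).trans (hle _), h3, h4⟩

/-- one reduction step -/
lemma red_step {t : ℕ} (m : Fin t → ℕ) (hm : ∀ i, 2 ≤ m i) (S : Set (Fin t)) (n : ℕ)
    (p : Fin t) (hp : p ∉ S) (a a' : Fin t → ℕ) (haa : ∀ i, i ≠ p → a i = a' i)
    (c d : Fin t → ℕ) (h1 : ∀ i, wt m S i * c i + d i ≤ a i)
    (h4 : ∀ i, n + d i ≤ (∑ i, c i) + ∑ i, d i)
    (c' d' : Fin t → ℕ) (h1' : ∀ i, wt m S i * c' i + d' i ≤ a' i)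
    (h3' : 2 * n ≤ 2 * (∑ i, c' i) + ∑ i, d' i)
    (h4' : ∀ i, n + d' i ≤ (∑ i, c' i) + ∑ i, d' i)
    (hlt : c p < c' p) :
    ∃ k D : Fin t → ℕ, (∀ i, wt m S i * k i + D i ≤ a' i) ∧ (∀ i, k i ≤ c' i) ∧ k p < c' p ∧
      2 * n ≤ 2 * (∑ i, k i) + ∑ i, D i ∧ ∀ i, n + D i ≤ (∑ i, k i) + ∑ i, D i := by
  have hw : ∀ i, 2 ≤ wt m S i := by
    intro i; unfold wt; have := hm i; split_ifs <;> omega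
  set w := wt m S with hwdef
  let k := Function.update c' p (c' p - 1)
  let D := Function.update d' p (d' p + w p)
  have hk : (∑ i, k i) + c' p = (∑ i, c' i) + (c' p - 1) := sum_upd _ _ _
  have hD : (∑ i, D i) + d' p = (∑ i, d' i) + (d' p + w p) := sum_upd _ _ _
  have hkp : k p = c' p - 1 := by simp [k]
  have hDp : D p = d' p + w p := by simp [D]
  have hk' : ∀ i, i ≠ p → k i = c' i := fun i hi => by simp [k, hi]
  have hD' : ∀ i, i ≠ p → D i = d' i := fun i hi => by simp [D, hi]
  have hmul : w p * c' p = w p * (c' p - 1) + w p := by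
    obtain ⟨x, hx⟩ : ∃ x, c' p = x + 1 := ⟨c' p - 1, by omega⟩
    rw [hx]; simp; ring
  have hkD : ∀ i, w i * k i + D i ≤ a' i := by
    intro i
    by_cases hi : i = p
    · subst hi; rw [hkp, hDp]; have := h1' i; omega
    · rw [hk' i hi, hD' i hi]; exact h1' i
  have hkc : ∀ i, k i ≤ c' i := by
    intro i
    by_cases hi : i = p
    · subst hi; omega
    · rw [hk' i hi]
  have hwp := hw p
  by_cases hcase : n + 1 + d' p ≤ (∑ i, c' i) + ∑ i, d' i
  · refine ⟨k, D, hkD, hkc, by omega, by omega, ?_⟩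
    intro i
    by_cases hi : i = p
    · subst hi; omega
    · rw [hD' i hi]; have := h4' i; omega
  · -- find q
    have hq : ∃ q, q ≠ p ∧ c' q + d' q < c q + d q := by
      by_contra hcon
      push Not at hcon
      have hs : ∀ f : Fin t → ℕ, ∑ i, f i = f p + ∑ i ∈ Finset.univ.erase p, f i := fun f =>
        (Finset.add_sum_erase _ _ (Finset.mem_univ p)).symm
      have hle : ∑ i ∈ Finset.univ.erase p, (c i + d i) ≤ ∑ i ∈ Finset.univ.erase p, (c' i + d' i) :=
        Finset.sum_le_sum fun i hi => hcon i (Finset.ne_of_mem_erase hi)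
      rw [Finset.sum_add_distrib, Finset.sum_add_distrib] at hle
      have := h4 p
      have := hs c; have := hs d; have := hs c'; have := hs d'
      omega
    obtain ⟨q, hqp, hq⟩ := hq
    have hwq := hw q
    by_cases hroom : w q * c' q + d' q < a' q
    · let D2 := Function.update D q (D q + 1)
      have hD2 : (∑ i, D2 i) + D q = (∑ i, D i) + (D q + 1) := sum_upd _ _ _
      have hD2q : D2 q = D q + 1 := by simp [D2]
      have hD2' : ∀ i, i ≠ q → D2 i = D i := fun i hi => by simp [D2, hi]
      refine ⟨k, D2, ?_, hkc, by omega, by omega, ?_⟩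
      · intro i
        by_cases hi : i = q
        · subst hi; rw [hD2q, hk' i hqp, hD' i hqp]; omega
        · rw [hD2' i hi]; exact hkD i
      · intro i
        by_cases hi : i = q
        · subst hi; rw [hD2q, hD' i hqp]; have := h4' i; omega
        · rw [hD2' i hi]
          by_cases hi : i = p
          · subst hi; have := h4' i; omega
          · rw [hD' i hi]; have := h4' i; omega
    · have hcq : c q < c' q := by
        by_contra hcon
        push Not at hcon
        have e1 := h1 q
        rw [haa q hqp] at e1
        obtain ⟨x, hx⟩ := Nat.exists_eq_add_of_le hcon
        obtain ⟨y, hy⟩ := Nat.exists_eq_add_of_le hwq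
        rw [hx, mul_add] at e1
        have : x ≤ w q * x := Nat.le_mul_of_pos_left _ (by omega)
        omega
      let k2 := Function.update k q (c' q - 1)
      let D2 := Function.update D q (d' q + w q)
      have hk2 : (∑ i, k2 i) + k q = (∑ i, k i) + (c' q - 1) := sum_upd _ _ _
      have hD2 : (∑ i, D2 i) + D q = (∑ i, D i) + (d' q + w q) := sum_upd _ _ _
      have hk2q : k2 q = c' q - 1 := by simp [k2]
      have hD2q : D2 q = d' q + w q := by simp [D2]
      have hk2' : ∀ i, i ≠ q → k2 i = k i := fun i hi => by simp [k2, hi]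
      have hD2' : ∀ i, i ≠ q → D2 i = D i := fun i hi => by simp [D2, hi]
      have hmul : w q * c' q = w q * (c' q - 1) + w q := by
        obtain ⟨x, hx⟩ : ∃ x, c' q = x + 1 := ⟨c' q - 1, by omega⟩
        rw [hx]; simp; ring
      have z1 := hk' q hqp
      have z2 := hD' q hqp
      refine ⟨k2, D2, ?_, ?_, ?_, by omega, ?_⟩
      · intro i
        by_cases hi : i = q
        · subst hi; rw [hD2q, hk2q]; have := h1' i; omega
        · rw [hD2' i hi, hk2' i hi]; exact hkD i
      · intro i
        by_cases hi : i = q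
        · subst hi; omega
        · rw [hk2' i hi]; exact hkc i
      · rw [hk2' p hqp.symm]; omega
      · intro i
        by_cases hi : i = q
        · subst hi; rw [hD2q]; have := h4' i; omega
        · rw [hD2' i hi]
          by_cases hi : i = p
          · subst hi; have := h4' i; omega
          · rw [hD' i hi]; have := h4' i; omega

lemma red_all {t : ℕ} (m : Fin t → ℕ) (hm : ∀ i, 2 ≤ m i) (S : Set (Fin t)) (n : ℕ)
    (p : Fin t) (hp : p ∉ S) (a a' : Fin t → ℕ) (haa : ∀ i, i ≠ p → a i = a' i)
    (c d : Fin t → ℕ) (h1 : ∀ i, wt m S i * c i + d i ≤ a i)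
    (h4 : ∀ i, n + d i ≤ (∑ i, c i) + ∑ i, d i) (N : ℕ) :
    ∀ (c' d' : Fin t → ℕ) (_ : c' p = N) (_ : ∀ i, wt m S i * c' i + d' i ≤ a' i)
    (_ : 2 * n ≤ 2 * (∑ i, c' i) + ∑ i, d' i)
    (_ : ∀ i, n + d' i ≤ (∑ i, c' i) + ∑ i, d' i),
    ∃ k D : Fin t → ℕ, (∀ i, wt m S i * k i + D i ≤ a' i) ∧ (∀ i, k i ≤ c' i) ∧ k p ≤ c p ∧
      2 * n ≤ 2 * (∑ i, k i) + ∑ i, D i ∧ ∀ i, n + D i ≤ (∑ i, k i) + ∑ i, D i := by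
  induction N using Nat.strong_induction_on with
  | _ N ih =>
    intro c' d' hN h1' h3' h4'
    by_cases hlt : c p < c' p
    · obtain ⟨k, D, e1, e2, e3, e4, e5⟩ :=
        red_step m hm S n p hp a a' haa c d h1 h4 c' d' h1' h3' h4' hlt
      obtain ⟨k2, D2, f1, f2, f3, f4, f5⟩ := ih (k p) (by omega) k D rfl e1 e4 e5
      exact ⟨k2, D2, f1, fun i => (f2 i).trans (e2 i), f3, f4, f5⟩
    · exact ⟨c', d', h1', fun i => le_rfl, by omega, h3', h4'⟩

lemma ExpMem.crit {t : ℕ} (m : Fin t → ℕ) (hm : ∀ i, 2 ≤ m i) (S : Set (Fin t)) (n : ℕ)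
    (p : Fin t) (hp : p ∉ S) (e u u' : Fin t ⊕ Fin t →₀ ℕ)
    (h : ∀ i, i ≠ inl p → i ≠ inr p → u i = e i ∧ u' i = e i) (hu : u (inl p) ≤ e (inl p))
    (hu' : u' (inr p) ≤ e (inr p)) (hU : ExpMem m S n u) (hU' : ExpMem m S n u') :
    ExpMem m S n e := by
  obtain ⟨c', d', h1', h2', h3', h4'⟩ := hU
  obtain ⟨c, d, h1, h2, h3, h4⟩ := hU'
  obtain ⟨k, D, f1, f2, f3, f4, f5⟩ := red_all m hm S n p hp (fun i => u' (inl i))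
    (fun i => u (inl i)) (fun i hi => by
      have := h (inl i) (by simpa using hi) (by simp); simp [this]) c d h1 h4 _ c' d' rfl h1' h3' h4'
  refine ⟨k, D, ?_, ?_, f4, f5⟩
  · intro i
    refine (f1 i).trans ?_
    by_cases hi : i = p
    · subst hi; exact hu
    · exact (h (inl i) (by simpa using hi) (by simp)).1.le
  · intro i hiS
    by_cases hi : i = p
    · subst hi
      exact (Nat.mul_le_mul_left _ f3).trans ((h2 i hiS).trans hu')
    · rw [← (h (inr i) (by simp) (by simpa using hi)).1]
      exact (Nat.mul_le_mul_left _ (f2 i)).trans (h2' i hiS)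

open Classical in
/-- the variable replacing `y_i` -/
noncomputable def zvar {t : ℕ} (S : Set (Fin t)) (i : Fin t) : Fin t ⊕ Fin t :=
  if i ∈ S then inl i else inr i

/-- the ideal after identifying `y_i` with `x_i` for `i ∈ S` -/
noncomputable def genI (K : Type*) [Field K] {t : ℕ} (m : Fin t → ℕ) (S : Set (Fin t)) :
    Ideal (MvPolynomial (Fin t ⊕ Fin t) K) :=
  Ideal.span ({f | ∃ i j : Fin t, i ≠ j ∧ f = X (inl i) * X (inl j)} ∪
    {f | ∃ i : Fin t, f = (X (inl i) * X (zvar S i)) ^ m i})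

/-- exponent of an edge -/
noncomputable def eE {t : ℕ} (i j : Fin t) : Fin t ⊕ Fin t →₀ ℕ :=
  Finsupp.single (inl i) 1 + Finsupp.single (inl j) 1

/-- exponent of a pendant generator -/
noncomputable def gE {t : ℕ} (m : Fin t → ℕ) (S : Set (Fin t)) (i : Fin t) : Fin t ⊕ Fin t →₀ ℕ :=
  m i • (Finsupp.single (inl i) 1 + Finsupp.single (zvar S i) 1)

lemma eE_inl {t : ℕ} (i j k : Fin t) :
    eE i j (inl k) = (if k = i then 1 else 0) + (if k = j then 1 else 0) := by
  simp [eE, Finsupp.single_apply, eq_comm]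

lemma eE_inr {t : ℕ} (i j k : Fin t) : eE i j (inr k) = 0 := by
  simp [eE]

lemma gE_inl {t : ℕ} (m : Fin t → ℕ) (S : Set (Fin t)) (i k : Fin t) :
    gE m S i (inl k) = if k = i then wt m S i else 0 := by
  by_cases hk : k = i
  · subst hk
    by_cases hS : k ∈ S
    · simp [gE, zvar, wt, hS]; ring
    · simp [gE, zvar, wt, hS]
  · by_cases hS : i ∈ S <;> simp [gE, zvar, hS, Finsupp.single_apply, hk, Ne.symm hk]

lemma gE_inr {t : ℕ} (m : Fin t → ℕ) (S : Set (Fin t)) (i k : Fin t) (hk : k ∉ S) :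
    gE m S i (inr k) = if k = i then m i else 0 := by
  by_cases hki : k = i
  · subst hki; simp [gE, zvar, hk]
  · by_cases hS : i ∈ S <;> simp [gE, zvar, hS, Finsupp.single_apply, hki, Ne.symm hki]

open Classical in
lemma gE_inr' {t : ℕ} (m : Fin t → ℕ) (S : Set (Fin t)) (i k : Fin t) :
    gE m S i (inr k) ≤ if k = i ∧ k ∉ S then m i else 0 := by
  by_cases hki : k = i
  · subst hki; by_cases hS : k ∈ S <;> simp [gE, zvar, hS]
  · by_cases hS : i ∈ S <;> simp [gE, zvar, hS, Finsupp.single_apply, hki, Ne.symm hki]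

lemma ExpMem.add_edge {t : ℕ} {m : Fin t → ℕ} {S : Set (Fin t)} {n : ℕ}
    {e : Fin t ⊕ Fin t →₀ ℕ} (h : ExpMem m S n e) (i j : Fin t) (hij : i ≠ j) :
    ExpMem m S (n+1) (e + eE i j) := by
  obtain ⟨c, d, h1, h2, h3, h4⟩ := h
  have hs : ∑ k, (d k + eE i j (inl k)) = (∑ k, d k) + 2 := by
    rw [Finset.sum_add_distrib]
    simp [eE_inl, Finset.sum_add_distrib]
  refine ⟨c, fun k => d k + eE i j (inl k), ?_, ?_, ?_, ?_⟩
  · intro k; have := h1 k; simp only [Finsupp.add_apply]; omega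
  · intro k hk; have := h2 k hk; simp only [Finsupp.add_apply]; omega
  · rw [hs]; omega
  · intro k
    rw [hs]
    beta_reduce
    rw [eE_inl]
    have := h4 k
    split_ifs with ha hb hb
    · exact absurd (ha.symm.trans hb) hij
    all_goals omega

lemma ExpMem.add_gen {t : ℕ} {m : Fin t → ℕ} {S : Set (Fin t)} {n : ℕ}
    {e : Fin t ⊕ Fin t →₀ ℕ} (h : ExpMem m S n e) (i : Fin t) :
    ExpMem m S (n+1) (e + gE m S i) := by
  obtain ⟨c, d, h1, h2, h3, h4⟩ := h
  have hs : ∑ k, (c k + if k = i then 1 else 0) = (∑ k, c k) + 1 := by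
    rw [Finset.sum_add_distrib]; simp
  refine ⟨fun k => c k + if k = i then 1 else 0, d, ?_, ?_, ?_, ?_⟩
  · intro k
    have := h1 k
    rw [Finsupp.add_apply, gE_inl]
    by_cases hk : k = i
    · subst hk; simp [mul_add]; omega
    · simp [hk]; omega
  · intro k hk
    have := h2 k hk
    rw [Finsupp.add_apply, gE_inr _ _ _ _ hk]
    by_cases hk : k = i
    · subst hk; simp [mul_add]; omega
    · simp [hk]; omega
  · rw [hs]; omega
  · intro k; rw [hs]; have := h4 k; omega

lemma ExpMem.succ_cases {t : ℕ} (ht : 2 ≤ t) {m : Fin t → ℕ} {S : Set (Fin t)} {n : ℕ}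
    {e : Fin t ⊕ Fin t →₀ ℕ} (h : ExpMem m S (n+1) e) :
    (∃ i j, i ≠ j ∧ eE i j ≤ e ∧ ExpMem m S n (e - eE i j)) ∨
    (∃ i, gE m S i ≤ e ∧ ExpMem m S n (e - gE m S i)) := by
  obtain ⟨c, d, h1, h2, h3, h4⟩ := h
  by_cases hc : ∃ i, c i ≠ 0
  · right
    obtain ⟨i, hi⟩ := hc
    have hmul : ∀ w : ℕ, w * c i = w * (c i - 1) + w := by
      intro w
      obtain ⟨x, hx⟩ : ∃ x, c i = x + 1 := ⟨c i - 1, by omega⟩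
      rw [hx]; simp; ring
    refine ⟨i, ?_, ?_⟩
    · rintro (k | k)
      · rw [gE_inl]
        by_cases hk : k = i
        · subst hk; have := h1 k; have := hmul (wt m S k); simp; omega
        · simp [hk]
      · refine (gE_inr' m S i k).trans ?_
        by_cases hk : k = i ∧ k ∉ S
        · rw [if_pos hk]
          obtain ⟨hk1, hk2⟩ := hk
          subst hk1; have := h2 k hk2; have := hmul (m k); omega
        · rw [if_neg hk]; exact Nat.zero_le _
    · let k := Function.update c i (c i - 1)
      have hk : (∑ i, k i) + c i = (∑ i, c i) + (c i - 1) := sum_upd _ _ _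
      have hki : k i = c i - 1 := by simp [k]
      have hk' : ∀ j, j ≠ i → k j = c j := fun j hj => by simp [k, hj]
      refine ⟨k, d, ?_, ?_, by omega, ?_⟩
      · intro j
        rw [Finsupp.tsub_apply, gE_inl]
        have := h1 j
        by_cases hj : j = i
        · subst hj; have := hmul (wt m S j); simp [hki]; omega
        · simp [hj, hk' j hj]; omega
      · intro j hjS
        rw [Finsupp.tsub_apply, gE_inr _ _ _ _ hjS]
        have := h2 j hjS
        by_cases hj : j = i
        · subst hj; have := hmul (m j); simp [hki]; omega
        · simp [hj, hk' j hj]; omega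
      · intro j; have := h4 j; omega
  · left
    push Not at hc
    have hcs : ∑ i, c i = 0 := by simp [hc]
    rw [hcs] at h3 h4
    obtain ⟨i, -, hi⟩ := Finset.exists_max_image Finset.univ d ⟨⟨0, by omega⟩, Finset.mem_univ _⟩
    have hne : (Finset.univ.erase i).Nonempty := by
      rw [← Finset.card_pos, Finset.card_erase_of_mem (Finset.mem_univ i)]
      simp; omega
    obtain ⟨j, hj, hjmax⟩ := Finset.exists_max_image (Finset.univ.erase i) d hne
    have hji : j ≠ i := Finset.ne_of_mem_erase hj
    have hsi : ∑ k, d k = d i + ∑ k ∈ Finset.univ.erase i, d k :=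
      (Finset.add_sum_erase _ _ (Finset.mem_univ i)).symm
    have hsj : ∑ k ∈ Finset.univ.erase i, d k =
        d j + ∑ k ∈ (Finset.univ.erase i).erase j, d k :=
      (Finset.add_sum_erase _ _ hj).symm
    have hdj : 0 < d j := by
      by_contra hcon
      have : ∑ k ∈ Finset.univ.erase i, d k = 0 := by
        apply Finset.sum_eq_zero
        intro k hk; have := hjmax k hk; omega
      have := h4 i; omega
    have hdi : d j ≤ d i := hi j (Finset.mem_univ j)
    have hle : ∀ k, eE i j (inl k) ≤ d k := by
      intro k
      rw [eE_inl]
      by_cases hk : k = i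
      · subst hk; simp [hji.symm]; omega
      · by_cases hk' : k = j
        · subst hk'; simp [hk]; omega
        · simp [hk, hk']
    have hsum : (∑ k, (d k - eE i j (inl k))) + 2 = ∑ k, d k := by
      have e1 : ∑ k, d k = ∑ k, ((d k - eE i j (inl k)) + eE i j (inl k)) :=
        Finset.sum_congr rfl fun k _ => (Nat.sub_add_cancel (hle k)).symm
      rw [e1, Finset.sum_add_distrib]
      congr 1
      simp [eE_inl, Finset.sum_add_distrib]
    refine ⟨i, j, hji.symm, ?_, c, fun k => d k - eE i j (inl k), ?_, ?_, ?_, ?_⟩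
    · rintro (k | k)
      · have := hle k; have := h1 k; simp only [hc] at this; omega
      · rw [eE_inr]; exact Nat.zero_le _
    · intro k; rw [Finsupp.tsub_apply]; have h5 := h1 k; have := hle k; simp only [hc] at h5 ⊢; omega
    · intro k hk; simp [hc]
    · rw [hcs]; beta_reduce; omega
    · intro k
      rw [hcs]
      beta_reduce
      have hk4 := h4 k
      by_cases hk : k = i ∨ k = j
      · have : 1 ≤ eE i j (inl k) := by
          rw [eE_inl]; rcases hk with hk | hk <;> simp [hk]
        have := hle k
        omega
      · push Not at hk
        have hkm : k ∈ (Finset.univ.erase i).erase j := by simp [hk.1, hk.2]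
        have h6 : d k ≤ ∑ k ∈ (Finset.univ.erase i).erase j, d k :=
          Finset.single_le_sum (f := d) (fun _ _ => Nat.zero_le _) hkm
        have h7 := hjmax k (Finset.mem_of_mem_erase hkm)
        omega

lemma genI_pow {K : Type*} [Field K] {t : ℕ} (ht : 2 ≤ t) (m : Fin t → ℕ) (S : Set (Fin t))
    (n : ℕ) : genI K m S ^ n =
      Ideal.span ((fun s => monomial s (1 : K)) '' {e | ExpMem m S n e}) := by
  have hg1 : ∀ i j : Fin t, (X (inl i) * X (inl j) : MvPolynomial (Fin t ⊕ Fin t) K) =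
      monomial (eE i j) 1 := by
    intro i j; simp [X, monomial_mul, eE]
  have hg2 : ∀ i : Fin t, ((X (inl i) * X (zvar S i)) ^ m i : MvPolynomial (Fin t ⊕ Fin t) K) =
      monomial (gE m S i) 1 := by
    intro i; simp [X, monomial_mul, monomial_pow, gE]
  induction n with
  | zero =>
    rw [pow_zero, Ideal.one_eq_top, eq_comm, Ideal.eq_top_iff_one]
    apply Ideal.subset_span
    exact ⟨0, ⟨0, 0, by simp, by simp, by simp, by simp⟩, by simp⟩
  | succ n ih =>
    rw [pow_succ, ih, genI, Ideal.span_mul_span']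
    apply le_antisymm
    · rw [Ideal.span_le]
      rintro _ ⟨_, ⟨e, he, rfl⟩, g, (⟨i, j, hij, rfl⟩ | ⟨i, rfl⟩), rfl⟩
      · apply Ideal.subset_span
        exact ⟨e + eE i j, ExpMem.add_edge he i j hij, by simp [hg1, monomial_mul]⟩
      · apply Ideal.subset_span
        exact ⟨e + gE m S i, ExpMem.add_gen he i, by simp [hg2, monomial_mul]⟩
    · rw [Ideal.span_le]
      rintro _ ⟨e, he, rfl⟩
      rcases ExpMem.succ_cases ht he with ⟨i, j, hij, hle, hmem⟩ | ⟨i, hle, hmem⟩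
      · apply Ideal.subset_span
        refine ⟨_, ⟨_, hmem, rfl⟩, _, Or.inl ⟨i, j, hij, rfl⟩, ?_⟩
        simp [hg1, monomial_mul, tsub_add_cancel_of_le hle]
      · apply Ideal.subset_span
        refine ⟨_, ⟨_, hmem, rfl⟩, _, Or.inr ⟨i, rfl⟩, ?_⟩
        simp [hg2, monomial_mul, tsub_add_cancel_of_le hle]

lemma mem_genI_pow {K : Type*} [Field K] {t : ℕ} (ht : 2 ≤ t) (m : Fin t → ℕ) (S : Set (Fin t))
    (n : ℕ) (f : MvPolynomial (Fin t ⊕ Fin t) K) :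
    f ∈ genI K m S ^ n ↔ ∀ e ∈ f.support, ExpMem m S n e := by
  rw [genI_pow ht, mem_ideal_span_monomial_image]
  refine forall₂_congr fun e _ => ⟨?_, fun h => ⟨e, h, le_rfl⟩⟩
  rintro ⟨s, hs, hle⟩
  exact ExpMem.mono hs hle

/-- identify `y_i` with `x_i` for `i ∈ S` -/
noncomputable def phi (K : Type*) [Field K] {t : ℕ} (S : Set (Fin t)) :
    MvPolynomial (Fin t ⊕ Fin t) K →ₐ[K] MvPolynomial (Fin t ⊕ Fin t) K :=
  aeval (Sum.elim (fun i => X (inl i)) (fun i => X (zvar S i)))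

lemma zvar_empty {t : ℕ} (i : Fin t) : zvar ∅ i = inr i := by simp [zvar]

lemma map_phi (K : Type*) [Field K] {t : ℕ} (m : Fin t → ℕ) (S : Set (Fin t)) :
    (genI K m ∅).map (phi K S) = genI K m S := by
  rw [genI, genI, Ideal.map_span]
  congr 1
  ext f
  constructor
  · rintro ⟨_, (⟨i, j, hij, rfl⟩ | ⟨i, rfl⟩), rfl⟩
    · exact Or.inl ⟨i, j, hij, by simp [phi]⟩
    · exact Or.inr ⟨i, by simp [phi, zvar_empty]⟩
  · rintro (⟨i, j, hij, rfl⟩ | ⟨i, rfl⟩)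
    · exact ⟨_, Or.inl ⟨i, j, hij, rfl⟩, by simp [phi]⟩
    · exact ⟨_, Or.inr ⟨i, rfl⟩, by simp [phi, zvar_empty]⟩

lemma sub_phi_mem (K : Type*) [Field K] {t : ℕ} (S : Set (Fin t))
    (J : Ideal (MvPolynomial (Fin t ⊕ Fin t) K))
    (hJ : ∀ i ∈ S, (X (inr i) - X (inl i) : MvPolynomial (Fin t ⊕ Fin t) K) ∈ J)
    (g : MvPolynomial (Fin t ⊕ Fin t) K) : g - phi K S g ∈ J := by
  rw [← Ideal.Quotient.eq]
  have : (Ideal.Quotient.mkₐ K J).comp (phi K S) = Ideal.Quotient.mkₐ K J := by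
    apply MvPolynomial.algHom_ext
    rintro (i | i)
    · simp [phi]
    · by_cases hi : i ∈ S
      · simp only [phi, AlgHom.comp_apply, aeval_X, Sum.elim_inr, zvar, if_pos hi]
        symm
        exact Ideal.Quotient.eq.2 (hJ i hi)
      · simp [phi, zvar, hi]
  exact (DFunLike.congr_fun this g).symm

/-- the regular sequence -/
noncomputable def theta (K : Type*) [Field K] (t : ℕ) : List (MvPolynomial (Fin t ⊕ Fin t) K) :=
  List.ofFn (fun i : Fin t => X (inr i) - X (inl i))

lemma theta_weakly (K : Type*) [Field K] {t : ℕ} (ht : 2 ≤ t) (m : Fin t → ℕ)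
    (hm : ∀ i, 2 ≤ m i) (n : ℕ) :
    RingTheory.Sequence.IsWeaklyRegular (MvPolynomial (Fin t ⊕ Fin t) K ⧸ genI K m ∅ ^ n)
      (theta K t) := by
  rw [weaklyRegular_quot_iff]
  intro i hi g hg
  have hit : i < t := by simpa [theta] using hi
  let p : Fin t := ⟨i, hit⟩
  let S : Set (Fin t) := {j | j.1 < i}
  have hpS : p ∉ S := by simp [p, S]
  have hth : (theta K t)[i] = X (inr p) - X (inl p) := by simp [theta, p]
  rw [hth] at hg
  set J := Ideal.ofList ((theta K t).take i) with hJdef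
  have hJ : ∀ j ∈ S, (X (inr j) - X (inl j) : MvPolynomial (Fin t ⊕ Fin t) K) ∈ J := by
    intro j hj
    apply Ideal.subset_span
    show _ ∈ (theta K t).take i
    rw [List.mem_take_iff_getElem]
    exact ⟨j.1, by simp [theta]; exact hj, by simp [theta]⟩
  have hJ' : ∀ f ∈ J, phi K S f = 0 := by
    have : J ≤ RingHom.ker (phi K S) := by
      refine Ideal.span_le.2 ?_
      intro f hf
      change f ∈ (theta K t).take i at hf
      rw [List.mem_take_iff_getElem] at hf
      obtain ⟨j, hj, rfl⟩ := hf
      have hj1 : j < i := by omega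
      have hj2 : j < t := by omega
      have hjS : (⟨j, hj2⟩ : Fin t) ∈ S := hj1
      simp [theta, phi, zvar, hjS, RingHom.mem_ker]
    exact fun f hf => this hf
  have hsub := sub_phi_mem K S J hJ
  have hpow : (genI K m ∅ ^ n).map (phi K S) = genI K m S ^ n := by
    rw [Ideal.map_pow, map_phi]
  have h1 : (X (inr p) - X (inl p)) * phi K S g ∈ genI K m S ^ n := by
    obtain ⟨a, ha, b, hb, hab⟩ := Submodule.mem_sup.1 hg
    have h2 : phi K S ((X (inr p) - X (inl p)) * g) = (X (inr p) - X (inl p)) * phi K S g := by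
      rw [map_mul]; congr 1; simp [phi, zvar, hpS]
    rw [← h2, ← hab, map_add, hJ' b hb, add_zero, ← hpow]
    exact Ideal.mem_map_of_mem _ ha
  rw [mem_genI_pow ht] at h1
  have h3 : phi K S g ∈ genI K m S ^ n := by
    rw [mem_genI_pow ht]
    exact nzd_crit (inl p) (inr p) (by simp) (ExpMem m S n)
      (fun e u u' h hu hu' => ExpMem.crit m hm S n p hpS e u u' h hu hu') _ h1
  have h4 : genI K m S ^ n ≤ genI K m ∅ ^ n ⊔ J := by
    rw [← hpow, Ideal.map_le_iff_le_comap]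
    intro f hf
    rw [Ideal.mem_comap]
    have : phi K S f = f + -(f - phi K S f) := by ring
    rw [this]
    exact Submodule.add_mem_sup hf (J.neg_mem (hsub f))
  have h5 : g = phi K S g + (g - phi K S g) := by ring
  rw [h5]
  exact Ideal.add_mem _ (h4 h3) ((le_sup_right : J ≤ _) (hsub g))

lemma mem_max_iff {K : Type*} [Field K] {σ : Type*} (f : MvPolynomial σ K) :
    f ∈ Ideal.span (Set.range (X : σ → MvPolynomial σ K)) ↔ constantCoeff f = 0 := by
  rw [← Set.image_univ, mem_ideal_span_X_image]
  constructor
  · intro h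
    by_contra hc
    obtain ⟨i, -, hi⟩ := h 0 (by rw [mem_support_iff]; exact hc)
    simp at hi
  · intro h e he
    by_contra hc
    push Not at hc
    have : e = 0 := by ext i; simpa using hc i (Set.mem_univ i)
    subst this
    rw [mem_support_iff] at he
    exact he h

lemma max_prime (K : Type*) [Field K] (σ : Type*) :
    (Ideal.span (Set.range (X : σ → MvPolynomial σ K))).IsPrime := by
  have : Ideal.span (Set.range (X : σ → MvPolynomial σ K)) =
      RingHom.ker (constantCoeff : MvPolynomial σ K →+* K) := by
    ext f; rw [mem_max_iff, RingHom.mem_ker]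
  rw [this]
  exact RingHom.ker_isPrime _

lemma genI_le (K : Type*) [Field K] {t : ℕ} (m : Fin t → ℕ) (hm : ∀ i, 0 < m i) (S : Set (Fin t)) :
    genI K m S ≤ Ideal.span (Set.range fun i : Fin t => X (inl i)) := by
  refine Ideal.span_le.2 ?_
  rintro _ (⟨i, j, hij, rfl⟩ | ⟨i, rfl⟩)
  · exact Ideal.mul_mem_right _ _ (Ideal.subset_span ⟨i, rfl⟩)
  · refine Ideal.pow_mem_of_mem _ ?_ _ (hm i)
    exact Ideal.mul_mem_right _ _ (Ideal.subset_span ⟨i, rfl⟩)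

lemma dim_genI (K : Type*) [Field K] {t : ℕ} (m : Fin t → ℕ) (hm : ∀ i, 0 < m i)
    (n : ℕ) (hn : 1 ≤ n) :
    ringKrullDim (MvPolynomial (Fin t ⊕ Fin t) K ⧸ genI K m ∅ ^ n) = (t : WithBot ℕ∞) := by
  apply le_antisymm
  · refine dim_quot_le_of_primes _ _ fun p hp hle => ?_
    have hI : genI K m ∅ ≤ p := hp.le_of_pow_le hle
    have hxy : ∀ i, (X (inl i) : MvPolynomial (Fin t ⊕ Fin t) K) ∈ p ∨
        (X (inr i) : MvPolynomial (Fin t ⊕ Fin t) K) ∈ p := by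
      intro i
      have : ((X (inl i) * X (zvar ∅ i)) ^ m i : MvPolynomial (Fin t ⊕ Fin t) K) ∈ p :=
        hI (Ideal.subset_span (Or.inr ⟨i, rfl⟩))
      rw [zvar_empty] at this
      exact hp.mem_or_mem (hp.mem_of_pow_mem _ this)
    classical
    refine dim_quot_vars_le (τ := Fin t) t (by simp) p
      (fun i => if (X (inl i) : MvPolynomial (Fin t ⊕ Fin t) K) ∈ p then inr i else inl i) ?_
    rintro (i | i)
    · by_cases h : (X (inl i) : MvPolynomial (Fin t ⊕ Fin t) K) ∈ p
      · exact Or.inl h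
      · exact Or.inr ⟨i, by simp [h]⟩
    · by_cases h : (X (inl i) : MvPolynomial (Fin t ⊕ Fin t) K) ∈ p
      · exact Or.inr ⟨i, by simp [h]⟩
      · exact Or.inl ((hxy i).resolve_left h)
  · exact le_dim_quot t _ ((Ideal.pow_le_self (by omega)).trans (genI_le K m hm _))

lemma cm_of_ge_two (K : Type*) [Field K] {t : ℕ} (ht : 2 ≤ t) (m : Fin t → ℕ)
    (hm : ∀ i, 2 ≤ m i) (n : ℕ) (hn : 1 ≤ n) : IsCMQuot (genI K m ∅ ^ n) := by
  have hm0 : ∀ i, 0 < m i := fun i => by have := hm i; omega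
  have hth : ∀ r ∈ theta K t, r ∈ Ideal.span (Set.range (X : Fin t ⊕ Fin t → _)) := by
    intro r hr
    rw [theta, List.mem_ofFn] at hr
    obtain ⟨i, rfl⟩ := hr
    exact Ideal.sub_mem _ (Ideal.subset_span ⟨_, rfl⟩) (Ideal.subset_span ⟨_, rfl⟩)
  refine ⟨theta K t, hth, ⟨theta_weakly K ht m hm n, ?_⟩, ?_⟩
  · intro h
    have h1 : (Ideal.Quotient.mk (genI K m ∅ ^ n) 1) ∈
        (Ideal.ofList (theta K t) • ⊤ : Submodule (MvPolynomial (Fin t ⊕ Fin t) K) (_ ⧸ genI K m ∅ ^ n)) := by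
      rw [← h]; trivial
    rw [mk_mem_smul_top] at h1
    have h2 : genI K m ∅ ^ n ⊔ Ideal.ofList (theta K t) ≤
        Ideal.span (Set.range (X : Fin t ⊕ Fin t → MvPolynomial (Fin t ⊕ Fin t) K)) := by
      refine sup_le ?_ ?_
      · refine ((Ideal.pow_le_self (by omega)).trans (genI_le K m hm0 _)).trans ?_
        refine Ideal.span_mono ?_
        rintro _ ⟨i, rfl⟩
        exact ⟨_, rfl⟩
      · exact Ideal.span_le.2 hth
    have h3 := (mem_max_iff _).1 (h2 h1)
    simp at h3
  · rw [dim_genI K m hm0 n hn]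
    simp only [theta, List.length_ofFn]
    rfl

lemma ExpMem.deg {t : ℕ} {m : Fin t → ℕ} (hm : ∀ i, 0 < m i) {n : ℕ}
    {e : Fin t ⊕ Fin t →₀ ℕ} (h : ExpMem m ∅ n e) :
    2 * n ≤ ∑ i, (e (inl i) + e (inr i)) := by
  obtain ⟨c, d, h1, h2, h3, h4⟩ := h
  refine h3.trans ?_
  rw [Finset.mul_sum, ← Finset.sum_add_distrib]
  refine Finset.sum_le_sum fun i _ => ?_
  have a1 := h1 i
  have a2 := h2 i (by simp)
  simp only [wt, Set.mem_empty_iff_false, if_false] at a1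
  have : c i ≤ m i * c i := Nat.le_mul_of_pos_left _ (hm i)
  omega

lemma ncm_core (K : Type*) [Field K] {t : ℕ} (ht : 2 ≤ t) (m : Fin t → ℕ)
    (hm : ∀ i, 0 < m i) (hcm : IsCMQuot (genI K m ∅ ^ 2)) (p : Fin t)
    (e : Fin t ⊕ Fin t →₀ ℕ) (he : ¬ ExpMem m ∅ 2 e)
    (hx : ∀ i, X (inl i) * monomial e (1 : K) ∈ genI K m ∅ ^ 2)
    (hy : X (inr p) * monomial e (1 : K) ∈ genI K m ∅ ^ 2) : False := by
  obtain ⟨rs, hrs, hreg, hlen⟩ := hcm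
  rw [dim_genI K m hm 2 (by omega)] at hlen
  set 𝔪 := Ideal.span (Set.range (X : Fin t ⊕ Fin t → MvPolynomial (Fin t ⊕ Fin t) K)) with h𝔪
  have : 𝔪.IsPrime := max_prime K _
  have hann : ∀ s : MvPolynomial (Fin t ⊕ Fin t) K,
      s • (Ideal.Quotient.mk (genI K m ∅ ^ 2) (monomial e (1 : K))) = 0 ↔
      s * monomial e (1 : K) ∈ genI K m ∅ ^ 2 := by
    intro s
    rw [← Ideal.Quotient.eq_zero_iff_mem, map_mul]
    rfl
  obtain ⟨P, h', hP, hPm, hPann, hPh⟩ := exists_prime_ann 𝔪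
    (Ideal.Quotient.mk (genI K m ∅ ^ 2) (monomial e (1 : K))) (by
      intro s hs
      rw [hann, mem_genI_pow ht] at hs
      rw [h𝔪, mem_max_iff]
      by_contra hc
      refine he (hs e ?_)
      rw [mem_support_iff]
      have := coeff_mul_monomial 0 e (1 : K) s
      rw [zero_add] at this
      rw [this, mul_one]
      exact hc)
  have hle := length_le_dim 𝔪 rs hrs hreg.toIsWeaklyRegular P hP hPm h' hPh
  rw [hlen] at hle
  have hdim := dim_quot_vars_le (τ := {k : Fin t // k ≠ p}) (t - 1) (by simp) P
    (fun k => inr k.1) (by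
      rintro (i | i)
      · exact Or.inl (hPann _ ((hann _).2 (hx i)))
      · by_cases hi : i = p
        · subst hi; exact Or.inl (hPann _ ((hann _).2 hy))
        · exact Or.inr ⟨⟨i, hi⟩, rfl⟩)
  have h3 : (t : WithBot ℕ∞) ≤ ((t - 1 : ℕ) : WithBot ℕ∞) := le_trans hle hdim
  have h4 : t ≤ t - 1 := by exact_mod_cast h3
  omega

lemma edge_mem (K : Type*) [Field K] {t : ℕ} (m : Fin t → ℕ) (i j : Fin t) (hij : i ≠ j) :
    (X (inl i) * X (inl j) : MvPolynomial (Fin t ⊕ Fin t) K) ∈ genI K m ∅ :=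
  Ideal.subset_span (Or.inl ⟨i, j, hij, rfl⟩)

lemma pend_mem (K : Type*) [Field K] {t : ℕ} (m : Fin t → ℕ) (i : Fin t) :
    ((X (inl i) * X (inr i)) ^ m i : MvPolynomial (Fin t ⊕ Fin t) K) ∈ genI K m ∅ :=
  Ideal.subset_span (Or.inr ⟨i, by rw [zvar_empty]⟩)

lemma sq_mem {R : Type*} [CommRing R] (I : Ideal R) (a b c : R) (ha : a ∈ I) (hb : b ∈ I) :
    a * b * c ∈ I ^ 2 := by
  rw [pow_two]
  exact Ideal.mul_mem_right _ _ (Ideal.mul_mem_mul ha hb)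

lemma ncm_A (K : Type*) [Field K] {t : ℕ} (ht : 2 ≤ t) (m : Fin t → ℕ)
    (hm : ∀ i, 0 < m i) (hcm : IsCMQuot (genI K m ∅ ^ 2)) (p q j : Fin t) (hpq : p ≠ q)
    (hpj : p ≠ j) (hqj : q ≠ j) (hmp : m p = 1) : False := by
  have hh : (monomial (Finsupp.single (inl p) 1 + Finsupp.single (inl q) 1 +
      Finsupp.single (inl j) 1) (1 : K) : MvPolynomial (Fin t ⊕ Fin t) K) =
      X (inl p) * X (inl q) * X (inl j) := by
    simp [X, monomial_mul]
  have hyp := pend_mem K m p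
  rw [hmp, pow_one] at hyp
  refine ncm_core K ht m hm hcm p (Finsupp.single (inl p) 1 + Finsupp.single (inl q) 1 +
      Finsupp.single (inl j) 1) ?_ ?_ ?_
  · intro h
    have := h.deg hm
    simp [Finset.sum_add_distrib, Finsupp.single_apply] at this
  · intro l
    rw [hh]
    by_cases hl : l = p
    · subst hl
      convert sq_mem _ _ _ 1 (edge_mem K m l q hpq) (edge_mem K m l j hpj) using 1
      ring
    · convert sq_mem _ _ _ 1 (edge_mem K m l p hl) (edge_mem K m q j hqj) using 1
      ring
  · rw [hh]
    convert sq_mem _ _ _ 1 hyp (edge_mem K m q j hqj) using 1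
    ring

lemma ncm_B (K : Type*) [Field K] {t : ℕ} (ht : 2 ≤ t) (m : Fin t → ℕ)
    (hm : ∀ i, 0 < m i) (hcm : IsCMQuot (genI K m ∅ ^ 2)) (p q : Fin t) (hpq : p ≠ q)
    (hmp : m p = 1) (hmq : 2 ≤ m q) : False := by
  have hh : (monomial (Finsupp.single (inl p) 1 + Finsupp.single (inl q) (m q) +
      Finsupp.single (inr q) (m q)) (1 : K) : MvPolynomial (Fin t ⊕ Fin t) K) =
      X (inl p) * (X (inl q) * X (inr q)) ^ m q := by
    simp [X, monomial_mul, monomial_pow, add_assoc]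
  have hyp := pend_mem K m p
  rw [hmp, pow_one] at hyp
  refine ncm_core K ht m hm hcm p (Finsupp.single (inl p) 1 + Finsupp.single (inl q) (m q) +
      Finsupp.single (inr q) (m q)) ?_ ?_ ?_
  · rintro ⟨c, d, h1, h2, h3, h4⟩
    have hc : ∀ i, i ≠ q → c i = 0 := by
      intro i hi
      have := h2 i (by simp)
      have h0 := hm i
      simp [Finsupp.single_apply, Ne.symm hi] at this
      omega
    have hd : ∀ i, i ≠ p ∧ i ≠ q → d i = 0 := by
      rintro i ⟨hi, hi'⟩
      have := h1 i
      simp [Finsupp.single_apply, Ne.symm hi, Ne.symm hi'] at this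
      omega
    have hcs : ∑ i, c i = c q := Fintype.sum_eq_single q hc
    have hds : ∑ i, d i = d p + d q := Fintype.sum_eq_add p q hpq hd
    have e1 := h1 p
    have e2 := h1 q
    have e3 := h2 q (by simp)
    have e4 := h4 q
    simp [wt, hpq, hpq.symm, hc p hpq] at e1 e2 e3
    rw [hcs, hds] at h3 e4
    have hcq : c q ≤ 1 := by
      by_contra hcon
      have : m q * 2 ≤ m q * c q := Nat.mul_le_mul_left _ (by omega)
      omega
    have : c q = 0 ∨ c q = 1 := by omega
    rcases this with h | h
    · rw [h] at h3 e4
      omega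
    · rw [h] at h3 e4 e2
      omega
  · intro l
    rw [hh]
    by_cases hl : l = p
    · subst hl
      obtain ⟨k, hk⟩ : ∃ k, m q = k + 2 := ⟨m q - 2, by omega⟩
      convert sq_mem _ _ _ (X (inl q) ^ k * X (inr q) ^ (k+2))
        (edge_mem K m l q hpq) (edge_mem K m l q hpq) using 1
      rw [hk]
      ring
    · convert sq_mem _ _ _ 1 (edge_mem K m l p hl) (pend_mem K m q) using 1
      ring
  · rw [hh]
    convert sq_mem _ _ _ 1 hyp (pend_mem K m q) using 1
    ring

lemma conn {R : Type*} [CommRing R] (I J1 J2 : Ideal R) (f : R)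
    (hJ : ∀ u ∈ J1, ∀ v ∈ J2, u * v * f ∈ I) (rs : List R)
    (hreg : RingTheory.Sequence.IsWeaklyRegular (R ⧸ I) rs) (hlen : 2 ≤ rs.length)
    (hrs : ∀ r ∈ rs, r ∈ J1 ⊔ J2) :
    ∃ g, ∀ u ∈ J1, ∀ v ∈ J2, u * f - (u + v) * g ∈ I := by
  match rs, hlen with
  | r1 :: r2 :: l, _ =>
  rw [weaklyRegular_quot_iff] at hreg
  have g1 := hreg 0 (by simp)
  have g2 := hreg 1 (by simp)
  simp [Ideal.ofList] at g1 g2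
  obtain ⟨u1, hu1, v1, hv1, rfl⟩ := Submodule.mem_sup.1 (hrs r1 (by simp))
  obtain ⟨u2, hu2, v2, hv2, rfl⟩ := Submodule.mem_sup.1 (hrs r2 (by simp))
  have h1 : u1 * f ∈ I ⊔ Ideal.span {u1 + v1} := by
    apply g2
    have : (u2 + v2) * (u1 * f) = (u1 * v2 * f - u2 * v1 * f) + (u1 + v1) * (u2 * f) := by ring
    rw [this]
    refine Submodule.add_mem_sup (I.sub_mem (hJ _ hu1 _ hv2) (hJ _ hu2 _ hv1)) ?_
    exact Ideal.mul_mem_right _ _ (Ideal.mem_span_singleton_self _)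
  obtain ⟨a, ha, b, hb, hab⟩ := Submodule.mem_sup.1 h1
  obtain ⟨g, rfl⟩ := Ideal.mem_span_singleton'.1 hb
  refine ⟨g, fun u hu v hv => ?_⟩
  apply g1
  have : (u1 + v1) * (u * f - (u + v) * g) =
      (u * v1 * f - u1 * v * f) + (u + v) * a := by
    linear_combination (-(u + v)) * hab
  rw [this]
  exact I.add_mem (I.sub_mem (hJ _ hu _ hv1) (hJ _ hu1 _ hv)) (I.mul_mem_left _ ha)

lemma coeff_zero_of (K : Type*) [Field K] {t : ℕ} (ht : 2 ≤ t) (m : Fin t → ℕ)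
    (hm : ∀ i, 0 < m i) (p q : Fin t) (v : Fin t) (g : MvPolynomial (Fin t ⊕ Fin t) K)
    (hg : X (inr v) * g ∈ genI K m ∅ ^ 2) : coeff (eE p q) g = 0 := by
  by_contra hc
  rw [mem_genI_pow ht] at hg
  have := hg (eE p q + Finsupp.single (inr v) 1) (by
    rw [mem_support_iff, mul_comm, coeff_mul_X]; exact hc)
  have := this.deg hm
  simp [eE, Finset.sum_add_distrib, Finsupp.single_apply] at this

lemma ncm_C (K : Type*) [Field K] {t : ℕ} (ht : 2 ≤ t) (m : Fin t → ℕ)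
    (hm : ∀ i, 0 < m i) (hcm : IsCMQuot (genI K m ∅ ^ 2)) (p q : Fin t) (hpq : p ≠ q)
    (hall : ∀ l, l = p ∨ l = q) (hmp : m p = 1) (hmq : m q = 1) : False := by
  have hp := pend_mem K m p
  have hq := pend_mem K m q
  have hE := edge_mem K m p q hpq
  rw [hmp, pow_one] at hp
  rw [hmq, pow_one] at hq
  obtain ⟨rs, hrs, hreg, hlen⟩ := hcm
  rw [dim_genI K m hm 2 (by omega)] at hlen
  have hlen2 : ((rs.length : ℕ∞) : WithBot ℕ∞) = ((t : ℕ∞) : WithBot ℕ∞) := hlen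
  have hlen' : rs.length = t := by
    have := WithBot.coe_injective hlen2
    exact_mod_cast this
  let J1 : Ideal (MvPolynomial (Fin t ⊕ Fin t) K) := Ideal.span {X (inl q), X (inr p)}
  let J2 : Ideal (MvPolynomial (Fin t ⊕ Fin t) K) := Ideal.span {X (inl p), X (inr q)}
  have hJ : ∀ u ∈ J1, ∀ v ∈ J2, u * v * (X (inl p) * X (inl q)) ∈ genI K m ∅ ^ 2 := by
    intro u hu v hv
    obtain ⟨a, b, rfl⟩ := Ideal.mem_span_pair.1 hu
    obtain ⟨c, d, rfl⟩ := Ideal.mem_span_pair.1 hv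
    have k1 := sq_mem _ _ _ (a * c) hE hE
    have k2 := sq_mem _ _ _ (a * d) hE hq
    have k3 := sq_mem _ _ _ (b * c) hE hp
    have k4 := sq_mem _ _ _ (b * d) hp hq
    convert Ideal.add_mem _ (Ideal.add_mem _ k1 k2) (Ideal.add_mem _ k3 k4) using 1
    ring
  have hsup : Ideal.span (Set.range (X : Fin t ⊕ Fin t → MvPolynomial (Fin t ⊕ Fin t) K))
      ≤ J1 ⊔ J2 := by
    have l1 : J1 ≤ J1 ⊔ J2 := le_sup_left
    have l2 : J2 ≤ J1 ⊔ J2 := le_sup_right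
    refine Ideal.span_le.2 ?_
    rintro _ ⟨(l | l), rfl⟩ <;> rcases hall l with rfl | rfl
    · exact l2 (Ideal.subset_span (by simp))
    · exact l1 (Ideal.subset_span (by simp))
    · exact l1 (Ideal.subset_span (by simp))
    · exact l2 (Ideal.subset_span (by simp))
  obtain ⟨g, hg⟩ := conn _ J1 J2 _ hJ rs hreg.toIsWeaklyRegular (by omega)
    (fun r hr => hsup (hrs r hr))
  have a1 := hg 0 (Ideal.zero_mem _) (X (inr q)) (Ideal.subset_span (by simp))
  have a2 := hg (X (inr p)) (Ideal.subset_span (by simp)) 0 (Ideal.zero_mem _)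
  rw [zero_mul, zero_sub, zero_add, Ideal.neg_mem_iff] at a1
  rw [add_zero, ← mul_sub] at a2
  have b1 := coeff_zero_of K ht m hm p q q _ a1
  have b2 := coeff_zero_of K ht m hm p q p _ a2
  have hf : (X (inl p) * X (inl q) : MvPolynomial (Fin t ⊕ Fin t) K) = monomial (eE p q) 1 := by
    simp [X, monomial_mul, eE]
  rw [coeff_sub, b1, hf, coeff_monomial] at b2
  simp at b2

lemma ge_two_of_cm (K : Type*) [Field K] {t : ℕ} (ht : 2 ≤ t) (m : Fin t → ℕ)
    (hm : ∀ i, 0 < m i) (hcm : IsCMQuot (genI K m ∅ ^ 2)) : ∀ i, 2 ≤ m i := by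
  intro p
  by_contra hcon
  have hp1 : m p = 1 := by have := hm p; omega
  have : Nontrivial (Fin t) := Fin.nontrivial_iff_two_le.2 ht
  obtain ⟨q, hq⟩ := exists_ne p
  by_cases hmq : 2 ≤ m q
  · exact ncm_B K ht m hm hcm p q hq.symm hp1 hmq
  · have hq1 : m q = 1 := by have := hm q; omega
    by_cases hall : ∀ l, l = p ∨ l = q
    · exact ncm_C K ht m hm hcm p q hq.symm hall hp1 hq1
    · push Not at hall
      obtain ⟨j, hj1, hj2⟩ := hall
      exact ncm_A K ht m hm hcm p q j hq.symm hj1.symm hj2.symm hp1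

lemma genI_empty (K : Type*) [Field K] {t : ℕ} (m : Fin t → ℕ) :
    (Ideal.span
        ({f | ∃ i j : Fin t, i ≠ j ∧
            f = X (inl i) * X (inl j)} ∪
         {f | ∃ i : Fin t, f = (X (inl i) * X (inr i)) ^ m i} :
          Set (MvPolynomial (Fin t ⊕ Fin t) K))) = genI K m ∅ := by
  simp only [genI, zvar_empty]

/-- Let `G` be the graph on `{x_1,...,x_t,y_1,...,y_t}` (`x_i = inl i`, `y_i = inr i`),
`t ≥ 2`, whose edges are the matching edges `x_iy_i` and all edges `x_ix_j` (`i ≠ j`),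
with weight `1` on each `x_ix_j` and weight `m_i` on `x_iy_i`. Then
`R/I(G_ω)^n` is Cohen–Macaulay for all `n ≥ 1` iff `m_i ≥ 2` for all `i`. -/
theorem cm_iff_weights_ge_two {K : Type*} [Field K] (t : ℕ) (ht : 2 ≤ t)
    (m : Fin t → ℕ) (hm : ∀ i, 0 < m i) :
    (∀ n : ℕ, 1 ≤ n →
      IsCMQuot ((Ideal.span
        ({f | ∃ i j : Fin t, i ≠ j ∧
            f = X (inl i) * X (inl j)} ∪
         {f | ∃ i : Fin t, f = (X (inl i) * X (inr i)) ^ m i} :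
          Set (MvPolynomial (Fin t ⊕ Fin t) K))) ^ n)) ↔
    ∀ i : Fin t, 2 ≤ m i := by
  rw [genI_empty]
  constructor
  · intro h
    exact ge_two_of_cm K ht m hm (h 2 (by omega))
  · intro h n hn
    exact cm_of_ge_two K ht m h n hn
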